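/- Let L ≥ 2 be even. With Y'_π = ∏_{j=1}^{L} exp(−i(π/2)Sʸ_j), Z'_π = ∏_{j=1}^{L} exp(−i(π/2)σᶻ_j), and P the projection onto the hole-free subspace, one has P Y'_π U_KT Y'_π U_KT P = (−i)^L · P Z'_π P. -/

import Mathlib

noncomputable section
open Complex Matrix

/-- The Hilbert space operators of the `L`-site spin-1 chain: matrices on `(ℂ³)^{⊗L}`,
with the tensor factors indexed by sites and the single-site ordered basis `(|+⟩,|0⟩,|−⟩)`. -/
abbrev Op (L : ℕ) : Type := Matrix (Fin L → Fin 3) (Fin L → Fin 3) ℂ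

/-- The spin-1 matrix `Sˣ`. -/
def Sx : Matrix (Fin 3) (Fin 3) ℂ :=
  ((Real.sqrt 2 : ℝ) : ℂ)⁻¹ • !![0, 1, 0; 1, 0, 1; 0, 1, 0]

/-- The spin-1 matrix `Sʸ`. -/
def Sy : Matrix (Fin 3) (Fin 3) ℂ :=
  ((Real.sqrt 2 : ℝ) : ℂ)⁻¹ • !![0, -I, 0; I, 0, -I; 0, I, 0]

/-- The spin-1 matrix `Sᶻ = diag(1,0,−1)`. -/
def Sz : Matrix (Fin 3) (Fin 3) ℂ := !![1, 0, 0; 0, 0, 0; 0, 0, -1]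

/-- `site A j` is the one-site operator `A` acting on site `j` and identity elsewhere. -/
def site {L : ℕ} (A : Matrix (Fin 3) (Fin 3) ℂ) (j : Fin L) : Op L :=
  Matrix.of fun f g => ∏ k : Fin L, if k = j then A (f k) (g k) else (if f k = g k then 1 else 0)

/-- One factor `exp(iπ Sᶻ_u Sˣ_v)` of the Kennedy–Tasaki transformation. -/
def ktFactor {L : ℕ} (u v : Fin L) : Op L :=
  NormedSpace.exp (((Real.pi : ℂ) * I) • (site Sz u * site Sx v))

/-- The Kennedy–Tasaki transformation `U_KT = ∏_{1 ≤ u < v ≤ L} exp(iπ Sᶻ_u Sˣ_v)`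
(the factors pairwise commute, so the ordering is immaterial). -/
def UKT (L : ℕ) : Op L :=
  ((List.finRange L).map fun u =>
    ((List.finRange L).map fun v => if u < v then ktFactor u v else 1).prod).prod

/-- The p-wave basis vector `|↑⟩ = (|+⟩ − |−⟩)/√2`. -/
def up : Fin 3 → ℂ := ![((Real.sqrt 2 : ℝ) : ℂ)⁻¹, 0, -((Real.sqrt 2 : ℝ) : ℂ)⁻¹]

/-- The p-wave basis vector `|↓⟩ = |0⟩`. -/
def down : Fin 3 → ℂ := ![0, 1, 0]

/-- The p-wave basis vector `|h⟩ = (|+⟩ + |−⟩)/√2`. -/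
def hole : Fin 3 → ℂ := ![((Real.sqrt 2 : ℝ) : ℂ)⁻¹, 0, ((Real.sqrt 2 : ℝ) : ℂ)⁻¹]

/-- The rank-one operator `|a⟩⟨b|`. -/
def ketbra (a b : Fin 3 → ℂ) : Matrix (Fin 3) (Fin 3) ℂ := Matrix.vecMulVec a (star b)

/-- `σˣ = |↑⟩⟨↓| + |↓⟩⟨↑|` (annihilating `|h⟩`). -/
def sigx : Matrix (Fin 3) (Fin 3) ℂ := ketbra up down + ketbra down up

/-- `σʸ = −i|↑⟩⟨↓| + i|↓⟩⟨↑|` (annihilating `|h⟩`). -/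
def sigy : Matrix (Fin 3) (Fin 3) ℂ := (-I) • ketbra up down + I • ketbra down up

/-- `σᶻ = |↑⟩⟨↑| − |↓⟩⟨↓|` (annihilating `|h⟩`). -/
def sigz : Matrix (Fin 3) (Fin 3) ℂ := ketbra up up - ketbra down down

/-- `n = |↑⟩⟨↑| + |↓⟩⟨↓|` (annihilating `|h⟩`). -/
def nMat : Matrix (Fin 3) (Fin 3) ℂ := ketbra up up + ketbra down down

/-- `h = |h⟩⟨h|`. -/
def hMat : Matrix (Fin 3) (Fin 3) ℂ := ketbra hole hole

/-- `P = ⊗_{j=1}^L n_j`, the orthogonal projection onto the hole-free subspace. -/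
def Pproj (L : ℕ) : Op L := Matrix.of fun f g => ∏ k : Fin L, nMat (f k) (g k)

/-- The Heisenberg coupling `S_j · S_k`. -/
def heis {L : ℕ} (j k : Fin L) : Op L :=
  site Sx j * site Sx k + site Sy j * site Sy k + site Sz j * site Sz k

/-- The bilinear-biquadratic Hamiltonian
`H_BLBQ(θ) = Σ_{j=1}^{L−1} [cosθ (S_j·S_{j+1}) + sinθ (S_j·S_{j+1})²]`. -/
def HBLBQ (L : ℕ) (θ : ℝ) : Op L :=
  ∑ j : Fin L, if h : (j : ℕ) + 1 < L then
    ((Real.cos θ : ℝ) : ℂ) • heis j ⟨(j : ℕ) + 1, h⟩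
      + ((Real.sin θ : ℝ) : ℂ) • (heis j ⟨(j : ℕ) + 1, h⟩) ^ 2
  else 0

/-- The self-dual Hamiltonian `H_SD(θ) = H_BLBQ(θ) + U_KT H_BLBQ(θ) U_KT`. -/
def HSD (L : ℕ) (θ : ℝ) : Op L := HBLBQ L θ + UKT L * HBLBQ L θ * UKT L

/-- The spin-1/2 XXZ Hamiltonian written in the p-wave basis:
`H_XXZ(θ) = (cosθ−sinθ) Σ_j (−σˣ_jσˣ_{j+1} + σʸ_jσʸ_{j+1}) + sinθ Σ_j σᶻ_jσᶻ_{j+1}`. -/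
def HXXZ (L : ℕ) (θ : ℝ) : Op L :=
  ((Real.cos θ - Real.sin θ : ℝ) : ℂ) •
    (∑ j : Fin L, if h : (j : ℕ) + 1 < L then
      -(site sigx j * site sigx ⟨(j : ℕ) + 1, h⟩) + site sigy j * site sigy ⟨(j : ℕ) + 1, h⟩
    else 0)
  + ((Real.sin θ : ℝ) : ℂ) •
    (∑ j : Fin L, if h : (j : ℕ) + 1 < L then
      site sigz j * site sigz ⟨(j : ℕ) + 1, h⟩
    else 0)

/-- The global product `∏_{j=1}^L exp(c • A_j)` of commuting single-site exponentials. -/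
def globalProd (L : ℕ) (A : Matrix (Fin 3) (Fin 3) ℂ) (c : ℂ) : Op L :=
  ((List.finRange L).map fun j => NormedSpace.exp (c • site A j)).prod

/-- The symmetry flux `F^y_j = exp(−iπ Σ_{k<j} Sʸ_k) · Sʸ_j`. -/
def fluxY (L : ℕ) (j : Fin L) : Op L :=
  NormedSpace.exp ((-((Real.pi : ℂ) * I)) •
    ∑ k : Fin L, if (k : ℕ) < (j : ℕ) then site Sy k else 0) * site Sy j

/-!
The spin-1 matrices and `σᶻ` satisfy `A ^ 3 = A`, so every exponential involved is an explicit
quadratic polynomial: `exp (iπ A) = 1 - 2 A²` and `exp (-i(π/2) A) = 1 - i A - A²`. In the basis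
of product states labelled by the set `S` of sites carrying `|↑⟩` (the others carrying `|↓⟩`),
which spans the range of `P`, this gives

* `U_KT |S⟩ = (-1)^#{u < v | u ∈ S, v ∉ S} |S⟩`,
* `Y'_π |S⟩ = (-1)^#Sᶜ |Sᶜ⟩`,
* `Z'_π |S⟩ = (-i)^#S i^#Sᶜ |S⟩`.

The pairs counted for `S` and for `Sᶜ` together exhaust `S × Sᶜ`, so `Y'_π U_KT Y'_π U_KT` acts on
`|S⟩` as the sign `(-1)^(L + #S #Sᶜ)`. For even `L` the numbers `#S` and `#Sᶜ` have the same
parity, and this sign is `(-1)^#S = (-i)^L (-i)^#S i^#Sᶜ`.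
-/

section Exponential

variable {𝔸 : Type*} [NormedRing 𝔸] [NormedAlgebra ℂ 𝔸] [CompleteSpace 𝔸] {a : 𝔸}

theorem exp_mul_of_mul_eq_smul {p : 𝔸} {μ : ℂ} (h : a * p = μ • p) :
    NormedSpace.exp a * p = Complex.exp μ • p := by
  have pow_mul (k : ℕ) : a ^ k * p = μ ^ k • p := by
    induction k with
    | zero => simp
    | succ k ih => rw [pow_succ, mul_assoc, h, mul_smul_comm, ih, smul_smul, pow_succ']
  have exp_mul := (NormedSpace.exp_series_hasSum_exp' (𝕂 := ℂ) a).mul_right p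
  have exp_smul := (NormedSpace.exp_series_hasSum_exp' (𝕂 := ℂ) μ).smul_const p
  simp only [smul_mul_assoc, pow_mul] at exp_mul
  simp only [smul_assoc] at exp_smul
  rw [Complex.exp_eq_exp_ℂ]
  exact exp_mul.unique exp_smul

theorem exp_smul_of_pow_three_eq_self (h : a ^ 3 = a) (t : ℂ) :
    NormedSpace.exp (t • a) = 1 + Complex.sinh t • a + (Complex.cosh t - 1) • a ^ 2 := by
  have mul_sq : a * a ^ 2 = a := by rw [← pow_succ', h]
  have exp_kernel : NormedSpace.exp (t • a) * (1 - a ^ 2) = Complex.exp 0 • (1 - a ^ 2) :=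
    exp_mul_of_mul_eq_smul (by rw [smul_mul_assoc, mul_sub, mul_sq]; simp)
  have exp_pos : NormedSpace.exp (t • a) * (a ^ 2 + a) = Complex.exp t • (a ^ 2 + a) :=
    exp_mul_of_mul_eq_smul (by rw [smul_mul_assoc, mul_add, mul_sq, ← sq, add_comm])
  have exp_neg : NormedSpace.exp (t • a) * (a ^ 2 - a) = Complex.exp (-t) • (a ^ 2 - a) :=
    exp_mul_of_mul_eq_smul (by
      rw [smul_mul_assoc, mul_sub, mul_sq, ← sq, neg_smul, ← smul_neg, neg_sub])
  have resolution : (1 : 𝔸) =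
      (1 - a ^ 2) + ((1 / 2 : ℂ) • (a ^ 2 + a) + (1 / 2 : ℂ) • (a ^ 2 - a)) := by module
  calc NormedSpace.exp (t • a)
    _ = NormedSpace.exp (t • a) *
          ((1 - a ^ 2) + ((1 / 2 : ℂ) • (a ^ 2 + a) + (1 / 2 : ℂ) • (a ^ 2 - a))) := by
        rw [← resolution, mul_one]
    _ = 1 + Complex.sinh t • a + (Complex.cosh t - 1) • a ^ 2 := by
        rw [mul_add, mul_add, mul_smul_comm, mul_smul_comm, exp_kernel, exp_pos, exp_neg,
          Complex.exp_zero, Complex.sinh, Complex.cosh]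
        module

theorem exp_pi_mul_I_smul_of_pow_three_eq_self (h : a ^ 3 = a) :
    NormedSpace.exp (((Real.pi : ℂ) * I) • a) = 1 - (2 : ℂ) • a ^ 2 := by
  rw [exp_smul_of_pow_three_eq_self h, Complex.sinh_mul_I, Complex.cosh_mul_I, Complex.sin_pi,
    Complex.cos_pi]
  module

theorem exp_neg_pi_div_two_mul_I_smul_of_pow_three_eq_self (h : a ^ 3 = a) :
    NormedSpace.exp (-(((Real.pi / 2 : ℝ) : ℂ) * I) • a) = 1 - I • a - a ^ 2 := by
  rw [exp_smul_of_pow_three_eq_self h, Complex.sinh_neg, Complex.cosh_neg, Complex.sinh_mul_I,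
    Complex.cosh_mul_I, Complex.ofReal_div, Complex.ofReal_ofNat, Complex.sin_pi_div_two,
    Complex.cos_pi_div_two]
  module

open scoped Matrix.Norms.Operator in
theorem exp_neg_pi_div_two_mul_I_smul_mulVec {n : Type*} [Fintype n] [DecidableEq n]
    {A : Matrix n n ℂ} (h : A ^ 3 = A) (x : n → ℂ) :
    NormedSpace.exp (-(((Real.pi / 2 : ℝ) : ℂ) * I) • A) *ᵥ x = x - I • A *ᵥ x - A *ᵥ A *ᵥ x := by
  have exp_eq : NormedSpace.exp (-(((Real.pi / 2 : ℝ) : ℂ) * I) • A) = 1 - I • A - A ^ 2 :=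
    exp_neg_pi_div_two_mul_I_smul_of_pow_three_eq_self h
  simp only [exp_eq, Matrix.sub_mulVec, Matrix.one_mulVec, Matrix.smul_mulVec,
    Matrix.mulVec_mulVec, sq]

end Exponential

section TensorProduct

variable {ι n R : Type*} [Fintype ι] [CommSemiring R]

/-- The product vector `⊗ₖ φ k`, in the product basis of the tensor power. -/
def productVec (φ : ι → n → R) : (ι → n) → R := fun f => ∏ k, φ k (f k)

/-- The product operator `⊗ₖ A k`: the Kronecker product of a finite family of matrices. -/
def piKronecker (A : ι → Matrix n n R) : Matrix (ι → n) (ι → n) R :=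
  Matrix.of fun f g => ∏ k, A k (f k) (g k)

theorem productVec_smul (c : ι → R) (φ : ι → n → R) :
    productVec (fun k => c k • φ k) = (∏ k, c k) • productVec φ := by
  ext f
  exact Finset.prod_mul_distrib

theorem star_productVec [StarRing R] (φ : ι → n → R) :
    star (productVec φ) = productVec (fun k => star (φ k)) := by
  ext f
  exact star_prod _ _

theorem piKronecker_vecMulVec (φ ψ : ι → n → R) :
    piKronecker (fun k => vecMulVec (φ k) (ψ k)) = vecMulVec (productVec φ) (productVec ψ) := by
  ext f g
  exact Finset.prod_mul_distrib

theorem piKronecker_one [DecidableEq n] : piKronecker (1 : ι → Matrix n n R) = 1 := by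
  ext f g
  simp [piKronecker, Matrix.one_apply, Finset.prod_ite_zero, funext_iff]

theorem piKronecker_add [DecidableEq ι] (A B : ι → Matrix n n R) :
    piKronecker (A + B) = ∑ S : Finset ι, piKronecker (S.piecewise A B) := by
  ext f g
  have expand := (MultilinearMap.mkPiAlgebra R ι R).map_add_univ
    (fun k => A k (f k) (g k)) (fun k => B k (f k) (g k))
  simp only [MultilinearMap.mkPiAlgebra_apply] at expand
  rw [Matrix.sum_apply]
  refine expand.trans (Finset.sum_congr rfl fun S _ => Finset.prod_congr rfl fun k _ => ?_)
  by_cases hk : k ∈ S <;> simp [hk]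

variable [DecidableEq ι] [Fintype n]

theorem piKronecker_mulVec_productVec (A : ι → Matrix n n R) (φ : ι → n → R) :
    piKronecker A *ᵥ productVec φ = productVec fun k => A k *ᵥ φ k := by
  ext f
  simp only [Matrix.mulVec, dotProduct, piKronecker, productVec, Matrix.of_apply,
    ← Finset.prod_mul_distrib, Fintype.prod_sum]

theorem piKronecker_mul (A B : ι → Matrix n n R) :
    piKronecker (A * B) = piKronecker A * piKronecker B := by
  ext f g
  simp only [Matrix.mul_apply, piKronecker, Pi.mul_apply, Matrix.of_apply,
    ← Finset.prod_mul_distrib, Fintype.prod_sum]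

variable [DecidableEq n]

/-- `piKronecker` as a monoid homomorphism, which turns products of one-site operators into
pointwise products. -/
def piKroneckerHom : (ι → Matrix n n R) →* Matrix (ι → n) (ι → n) R where
  toFun := piKronecker
  map_one' := piKronecker_one
  map_mul' := piKronecker_mul

theorem piKronecker_mulSingle_mulVec_productVec {A : Matrix n n R} {j : ι} {φ : ι → n → R} {c : R}
    (h : A *ᵥ φ j = c • φ j) :
    piKronecker (Pi.mulSingle j A) *ᵥ productVec φ = c • productVec φ := by
  have pointwise (k : ι) :
      (Pi.mulSingle j A : ι → Matrix n n R) k *ᵥ φ k = (Pi.mulSingle j c : ι → R) k • φ k := by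
    obtain rfl | hkj := eq_or_ne k j <;> simp [*]
  rw [piKronecker_mulVec_productVec]
  simp only [pointwise, productVec_smul, Finset.prod_pi_mulSingle', Finset.mem_univ, if_true]

end TensorProduct

theorem list_prod_finRange_mulSingle {L : ℕ} {M : Type*} [Monoid M] (x : Fin L → M) :
    ((List.finRange L).map fun j => (Pi.mulSingle j (x j) : Fin L → M)).prod = x := by
  rw [← Finset.noncommProd_toFinset (List.finRange L) (fun j => Pi.mulSingle j (x j))
    (fun i _ j _ _ => Pi.mulSingle_apply_commute x i j) (List.nodup_finRange L)]
  simpa only [List.toFinset_finRange] using Finset.noncommProd_mulSingle x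

theorem list_prod_mulVec_of_forall_mulVec_eq_smul {n α R : Type*} [Fintype n] [DecidableEq n]
    [CommSemiring R] {l : List α} {A : α → Matrix n n R} {c : α → R} {x : n → R}
    (h : ∀ a ∈ l, A a *ᵥ x = c a • x) : (l.map A).prod *ᵥ x = (l.map c).prod • x := by
  induction l with
  | nil => simp
  | cons a l ih =>
    rw [List.forall_mem_cons] at h
    rw [List.map_cons, List.map_cons, List.prod_cons, List.prod_cons, ← Matrix.mulVec_mulVec,
      ih h.2, Matrix.mulVec_smul, h.1, smul_smul, mul_comm]

section Site

variable {L : ℕ} (A B : Matrix (Fin 3) (Fin 3) ℂ) (j : Fin L)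

theorem site_eq_piKronecker : site A j = piKronecker (Pi.mulSingle j A) := by
  ext f g
  simp only [site, piKronecker, Matrix.of_apply]
  refine Finset.prod_congr rfl fun k _ => ?_
  obtain rfl | hkj := eq_or_ne k j <;> simp [*, Matrix.one_apply]

theorem site_apply (f g : Fin L → Fin 3) :
    site A j f g = A (f j) (g j) * ∏ k ∈ Finset.univ.erase j, if f k = g k then 1 else 0 := by
  rw [site, Matrix.of_apply, ← Finset.mul_prod_erase _ _ (Finset.mem_univ j), if_pos rfl]
  congr 1
  exact Finset.prod_congr rfl fun k hk => if_neg (Finset.ne_of_mem_erase hk)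

/-- The embedding `A ↦ A_j` of the one-site operators into those of the chain. -/
def siteAlgHom : Matrix (Fin 3) (Fin 3) ℂ →ₐ[ℂ] Op L :=
  AlgHom.ofLinearMap
    { toFun := fun A => site A j
      map_add' := fun A B => by ext; simp only [site_apply, Matrix.add_apply, add_mul]
      map_smul' := fun c A => by ext; simp [site_apply, mul_assoc] }
    (by simp [site_eq_piKronecker, piKronecker_one])
    (fun A B => by simp [site_eq_piKronecker, Pi.mulSingle_mul, piKronecker_mul])

open scoped Matrix.Norms.Operator in
theorem exp_smul_site (c : ℂ) :
    NormedSpace.exp (c • site A j) = site (NormedSpace.exp (c • A)) j := by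
  have continuous_site : Continuous (siteAlgHom j) :=
    (siteAlgHom j).toLinearMap.continuous_of_finiteDimensional
  have : NormedAlgebra ℚ (Matrix (Fin 3) (Fin 3) ℂ) := NormedAlgebra.restrictScalars ℚ ℂ _
  rw [show c • site A j = siteAlgHom j (c • A) from (map_smul (siteAlgHom j) c A).symm]
  exact (NormedSpace.map_exp (siteAlgHom j) continuous_site (c • A)).symm

theorem site_pow (m : ℕ) : site (A ^ m) j = site A j ^ m :=
  map_pow (siteAlgHom j) A m

theorem commute_site {i j : Fin L} (h : i ≠ j) : Commute (site A i) (site B j) := by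
  simp only [site_eq_piKronecker]
  exact (Pi.mulSingle_commute h A B).map piKroneckerHom

theorem globalProd_eq_piKronecker (c : ℂ) :
    globalProd L A c = piKronecker fun _ => NormedSpace.exp (c • A) := by
  have prod_mulSingle := congrArg piKroneckerHom
    (list_prod_finRange_mulSingle fun _ : Fin L => NormedSpace.exp (c • A))
  rw [map_list_prod, List.map_map] at prod_mulSingle
  simp only [globalProd, exp_smul_site]
  simp only [site_eq_piKronecker]
  exact prod_mulSingle

end Site

section SingleSite

theorem inv_sqrt_two_mul_self : ((Real.sqrt 2 : ℝ) : ℂ)⁻¹ * ((Real.sqrt 2 : ℝ) : ℂ)⁻¹ = 1 / 2 := by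
  rw [← mul_inv, ← Complex.ofReal_mul, Real.mul_self_sqrt (by norm_num)]
  norm_num

theorem Sz_mulVec_up : Sz *ᵥ up = hole := by
  ext i; fin_cases i <;> simp [Sz, up, hole, Matrix.mulVec, dotProduct, Fin.sum_univ_three]

theorem Sz_mulVec_hole : Sz *ᵥ hole = up := by
  ext i; fin_cases i <;> simp [Sz, up, hole, Matrix.mulVec, dotProduct, Fin.sum_univ_three]

theorem Sz_mulVec_down : Sz *ᵥ down = 0 := by
  ext i; fin_cases i <;> simp [Sz, down, Matrix.mulVec, dotProduct, Fin.sum_univ_three]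

theorem Sx_mulVec_up : Sx *ᵥ up = 0 := by
  ext i; fin_cases i <;> simp [Sx, up, Matrix.mulVec, dotProduct, Fin.sum_univ_three]

theorem Sx_mulVec_hole : Sx *ᵥ hole = down := by
  ext i
  fin_cases i <;> simp [Sx, hole, down, Matrix.mulVec, dotProduct, Fin.sum_univ_three]
  linear_combination 2 * inv_sqrt_two_mul_self

theorem Sx_mulVec_down : Sx *ᵥ down = hole := by
  ext i; fin_cases i <;> simp [Sx, hole, down, Matrix.mulVec, dotProduct, Fin.sum_univ_three]

theorem Sy_mulVec_up : Sy *ᵥ up = I • down := by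
  ext i
  fin_cases i <;> simp [Sy, up, down, Matrix.mulVec, dotProduct, Fin.sum_univ_three]
  linear_combination 2 * I * inv_sqrt_two_mul_self

theorem Sy_mulVec_down : Sy *ᵥ down = -I • up := by
  ext i
  fin_cases i <;> simp [Sy, up, down, Matrix.mulVec, dotProduct, Fin.sum_univ_three, mul_comm]

theorem Sz_pow_three : Sz ^ 3 = Sz := by
  ext i j
  fin_cases i <;> fin_cases j <;> simp [Sz, pow_succ, Matrix.mul_apply, Fin.sum_univ_three]

theorem Sx_pow_three : Sx ^ 3 = Sx := by
  have cube : (!![0, 1, 0; 1, 0, 1; 0, 1, 0] : Matrix (Fin 3) (Fin 3) ℂ) ^ 3 =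
      (2 : ℂ) • !![0, 1, 0; 1, 0, 1; 0, 1, 0] := by
    ext i j
    fin_cases i <;> fin_cases j <;>
      simp [pow_succ, Matrix.mul_apply, Fin.sum_univ_three, one_add_one_eq_two]
  rw [Sx, smul_pow, cube, smul_smul]
  congr 1
  linear_combination 2 * ((Real.sqrt 2 : ℝ) : ℂ)⁻¹ * inv_sqrt_two_mul_self

theorem Sy_pow_three : Sy ^ 3 = Sy := by
  have cube : (!![0, -I, 0; I, 0, -I; 0, I, 0] : Matrix (Fin 3) (Fin 3) ℂ) ^ 3 =
      (2 : ℂ) • !![0, -I, 0; I, 0, -I; 0, I, 0] := by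
    ext i j
    fin_cases i <;> fin_cases j <;>
      simp [pow_succ, Matrix.mul_apply, Fin.sum_univ_three] <;> ring
  rw [Sy, smul_pow, cube, smul_smul]
  congr 1
  linear_combination 2 * ((Real.sqrt 2 : ℝ) : ℂ)⁻¹ * inv_sqrt_two_mul_self

theorem sigz_eq : sigz = !![1 / 2, 0, -1 / 2; 0, -1, 0; -1 / 2, 0, 1 / 2] := by
  ext i j
  simp only [sigz, ketbra, Matrix.sub_apply, Matrix.vecMulVec_apply, Pi.star_apply]
  fin_cases i <;> fin_cases j <;> simp [up, down, inv_sqrt_two_mul_self] <;> ring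

theorem sigz_mulVec_up : sigz *ᵥ up = up := by
  rw [sigz_eq]
  ext i
  fin_cases i <;> simp [up, Matrix.mulVec, dotProduct, Fin.sum_univ_three] <;> ring

theorem sigz_mulVec_down : sigz *ᵥ down = -down := by
  rw [sigz_eq]
  ext i
  fin_cases i <;> simp [down, Matrix.mulVec, dotProduct, Fin.sum_univ_three]

theorem sigz_pow_three : sigz ^ 3 = sigz := by
  rw [sigz_eq]
  ext i j
  fin_cases i <;> fin_cases j <;>
    simp [pow_succ, Matrix.mul_apply, Fin.sum_univ_three] <;> ring

theorem exp_Sy_mulVec_up :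
    NormedSpace.exp (-(((Real.pi / 2 : ℝ) : ℂ) * I) • Sy) *ᵥ up = down := by
  rw [exp_neg_pi_div_two_mul_I_smul_mulVec Sy_pow_three, Sy_mulVec_up, Matrix.mulVec_smul,
    Sy_mulVec_down]
  simp [smul_smul]

theorem exp_Sy_mulVec_down :
    NormedSpace.exp (-(((Real.pi / 2 : ℝ) : ℂ) * I) • Sy) *ᵥ down = -up := by
  rw [exp_neg_pi_div_two_mul_I_smul_mulVec Sy_pow_three, Sy_mulVec_down, Matrix.mulVec_smul,
    Sy_mulVec_up]
  simp [smul_smul]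

theorem exp_sigz_mulVec_up :
    NormedSpace.exp (-(((Real.pi / 2 : ℝ) : ℂ) * I) • sigz) *ᵥ up = -I • up := by
  rw [exp_neg_pi_div_two_mul_I_smul_mulVec sigz_pow_three, sigz_mulVec_up, sigz_mulVec_up]
  module

theorem exp_sigz_mulVec_down :
    NormedSpace.exp (-(((Real.pi / 2 : ℝ) : ℂ) * I) • sigz) *ᵥ down = I • down := by
  rw [exp_neg_pi_div_two_mul_I_smul_mulVec sigz_pow_three, sigz_mulVec_down, Matrix.mulVec_neg,
    sigz_mulVec_down]
  module

end SingleSite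

section SignCounting

variable {ι : Type*}

theorem card_product_filter_lt_add_card_product_filter_lt [LinearOrder ι] {S T : Finset ι}
    (h : Disjoint S T) :
    Finset.card {p ∈ S ×ˢ T | p.1 < p.2} + Finset.card {p ∈ T ×ˢ S | p.1 < p.2} =
      S.card * T.card := by
  have swap : Finset.card {p ∈ T ×ˢ S | p.1 < p.2} =
      Finset.card {p ∈ S ×ˢ T | ¬ p.1 < p.2} := by
    refine Finset.card_equiv (Equiv.prodComm ι ι) fun ⟨t, s⟩ => ?_
    simp only [Finset.mem_filter, Finset.mem_product, Equiv.prodComm_apply, Prod.swap_prod_mk,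
      not_lt, and_comm (a := t ∈ T)]
    exact and_congr_right fun hst => (h.forall_ne_finset hst.1 hst.2).symm.le_iff_lt.symm
  rw [swap, Finset.card_filter_add_card_filter_not, Finset.card_product]

theorem prod_piecewise_const [Fintype ι] [DecidableEq ι] {M : Type*} [CommMonoid M]
    (S : Finset ι) (a b : M) :
    ∏ k, S.piecewise (fun _ => a) (fun _ => b) k = a ^ S.card * b ^ Sᶜ.card := by
  rw [Finset.prod_piecewise, Finset.univ_inter, ← Finset.compl_eq_univ_sdiff, Finset.prod_const,
    Finset.prod_const]

theorem neg_one_pow_add_mul_eq_of_even {m n : ℕ} (h : Even (m + n)) :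
    (-1 : ℂ) ^ (m + n + m * n) = (-I) ^ (m + n) * ((-I) ^ m * I ^ n) := by
  have parity : Even (m * n) ↔ Even m := by
    rw [Nat.even_mul, ← Nat.even_add.mp h, or_self]
  calc (-1 : ℂ) ^ (m + n + m * n)
    _ = (-1) ^ m := by
        rw [pow_add, h.neg_one_pow, one_mul]
        exact neg_one_pow_congr parity
    _ = ((-I) * (-I)) ^ m * ((-I) * I) ^ n := by simp
    _ = (-I) ^ (m + n) * ((-I) ^ m * I ^ n) := by rw [mul_pow, mul_pow, pow_add, mul_mul_mul_comm]

end SignCounting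

section PWave

variable {L : ℕ} (S : Finset (Fin L))

/-- The hole-free basis state with `|↑⟩` at the sites in `S` and `|↓⟩` at the other sites. -/
def pWaveState : (Fin L → Fin 3) → ℂ :=
  productVec (S.piecewise (fun _ => up) (fun _ => down))

theorem Pproj_eq_sum_vecMulVec :
    Pproj L = ∑ S : Finset (Fin L), vecMulVec (pWaveState S) (star (pWaveState S)) := by
  refine (piKronecker_add (fun _ => ketbra up up) (fun _ => ketbra down down)).trans
    (Finset.sum_congr rfl fun S _ => ?_)
  rw [pWaveState, star_productVec, ← piKronecker_vecMulVec]
  congr 1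
  ext1 k
  by_cases hk : k ∈ S <;> simp [hk, ketbra]

theorem mul_Pproj_ext {A B : Op L} (h : ∀ S, A *ᵥ pWaveState S = B *ᵥ pWaveState S) :
    A * Pproj L = B * Pproj L := by
  simp only [Pproj_eq_sum_vecMulVec, Finset.mul_sum, Matrix.mul_vecMulVec, h]

theorem globalProd_Sy_mulVec_pWaveState :
    globalProd L Sy (-(((Real.pi / 2 : ℝ) : ℂ) * I)) *ᵥ pWaveState S =
      (-1 : ℂ) ^ Sᶜ.card • pWaveState Sᶜ := by
  have sign : (-1 : ℂ) ^ Sᶜ.card = ∏ k, S.piecewise (fun _ => (1 : ℂ)) (fun _ => -1) k := by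
    rw [prod_piecewise_const, one_pow, one_mul]
  rw [globalProd_eq_piKronecker, pWaveState, pWaveState, piKronecker_mulVec_productVec, sign,
    ← productVec_smul, Finset.piecewise_compl]
  congr 1
  ext1 k
  by_cases hk : k ∈ S
  · simp only [Finset.piecewise_eq_of_mem _ _ _ hk, exp_Sy_mulVec_up, one_smul]
  · simp only [Finset.piecewise_eq_of_notMem _ _ _ hk, exp_Sy_mulVec_down, neg_one_smul]

theorem globalProd_sigz_mulVec_pWaveState :
    globalProd L sigz (-(((Real.pi / 2 : ℝ) : ℂ) * I)) *ᵥ pWaveState S =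
      ((-I) ^ S.card * I ^ Sᶜ.card) • pWaveState S := by
  rw [globalProd_eq_piKronecker, pWaveState, piKronecker_mulVec_productVec,
    ← prod_piecewise_const, ← productVec_smul]
  congr 1
  ext1 k
  by_cases hk : k ∈ S
  · simp only [Finset.piecewise_eq_of_mem _ _ _ hk, exp_sigz_mulVec_up]
  · simp only [Finset.piecewise_eq_of_notMem _ _ _ hk, exp_sigz_mulVec_down]

open scoped Matrix.Norms.Operator in
theorem ktFactor_eq {u v : Fin L} (h : u ≠ v) :
    ktFactor u v = 1 - (2 : ℂ) • (site (Sz ^ 2) u * site (Sx ^ 2) v) := by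
  have comm := commute_site Sz Sx h
  have cube : (site Sz u * site Sx v) ^ 3 = site Sz u * site Sx v := by
    rw [comm.mul_pow, ← site_pow, ← site_pow, Sz_pow_three, Sx_pow_three]
  rw [site_pow, site_pow, ← comm.mul_pow]
  exact exp_pi_mul_I_smul_of_pow_three_eq_self cube

theorem site_mulVec_pWaveState {A : Matrix (Fin 3) (Fin 3) ℂ} {a b : ℂ} (hup : A *ᵥ up = a • up)
    (hdown : A *ᵥ down = b • down) (j : Fin L) :
    site A j *ᵥ pWaveState S = (if j ∈ S then a else b) • pWaveState S := by
  rw [site_eq_piKronecker]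
  refine piKronecker_mulSingle_mulVec_productVec ?_
  by_cases hj : j ∈ S <;> simp [hj, hup, hdown]

theorem site_Sz_sq_mulVec_pWaveState (j : Fin L) :
    site (Sz ^ 2) j *ᵥ pWaveState S = (if j ∈ S then 1 else 0 : ℂ) • pWaveState S :=
  site_mulVec_pWaveState S
    (by rw [sq, ← Matrix.mulVec_mulVec, Sz_mulVec_up, Sz_mulVec_hole, one_smul])
    (by rw [sq, ← Matrix.mulVec_mulVec, Sz_mulVec_down, Matrix.mulVec_zero, zero_smul]) j

theorem site_Sx_sq_mulVec_pWaveState (j : Fin L) :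
    site (Sx ^ 2) j *ᵥ pWaveState S = (if j ∈ S then 0 else 1 : ℂ) • pWaveState S :=
  site_mulVec_pWaveState S
    (by rw [sq, ← Matrix.mulVec_mulVec, Sx_mulVec_up, Matrix.mulVec_zero, zero_smul])
    (by rw [sq, ← Matrix.mulVec_mulVec, Sx_mulVec_down, Sx_mulVec_hole, one_smul]) j

theorem ktFactor_mulVec_pWaveState {u v : Fin L} (h : u ≠ v) :
    ktFactor u v *ᵥ pWaveState S = (if u ∈ S ∧ v ∉ S then -1 else 1 : ℂ) • pWaveState S := by
  rw [ktFactor_eq h, Matrix.sub_mulVec, Matrix.one_mulVec, Matrix.smul_mulVec,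
    ← Matrix.mulVec_mulVec, site_Sx_sq_mulVec_pWaveState, Matrix.mulVec_smul,
    site_Sz_sq_mulVec_pWaveState]
  by_cases hu : u ∈ S <;> by_cases hv : v ∈ S <;> simp [hu, hv]
  module

/-- The number of pairs of sites `u < v` with `|↑⟩` at `u` and `|↓⟩` at `v`, whose parity is the
sign of `U_KT` on the state labelled by `S`. -/
def numUpDownPairs : ℕ := Finset.card {p ∈ S ×ˢ Sᶜ | p.1 < p.2}

theorem numUpDownPairs_add_numUpDownPairs_compl :
    numUpDownPairs S + numUpDownPairs Sᶜ = S.card * Sᶜ.card := by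
  rw [numUpDownPairs, numUpDownPairs, compl_compl]
  exact card_product_filter_lt_add_card_product_filter_lt disjoint_compl_right

theorem UKT_mulVec_pWaveState :
    UKT L *ᵥ pWaveState S = (-1 : ℂ) ^ numUpDownPairs S • pWaveState S := by
  have sign : (-1 : ℂ) ^ numUpDownPairs S =
      ∏ u, ∏ v, if u < v then (if u ∈ S ∧ v ∉ S then -1 else 1 : ℂ) else 1 := by
    simp only [← ite_and]
    rw [← Fintype.prod_prod_type', Finset.prod_ite, Finset.prod_const, Finset.prod_const_one,
      mul_one, numUpDownPairs]
    congr 2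
    ext p
    simp [and_comm]
  rw [sign]
  simp only [UKT, Fin.prod_univ_def]
  refine list_prod_mulVec_of_forall_mulVec_eq_smul fun u _ =>
    list_prod_mulVec_of_forall_mulVec_eq_smul fun v _ => ?_
  by_cases huv : u < v
  · rw [if_pos huv, if_pos huv]
    exact ktFactor_mulVec_pWaveState S huv.ne
  · rw [if_neg huv, if_neg huv, Matrix.one_mulVec, one_smul]

theorem sq_globalProd_Sy_mul_UKT_mulVec_pWaveState :
    (globalProd L Sy (-(((Real.pi / 2 : ℝ) : ℂ) * I)) * UKT L) ^ 2 *ᵥ pWaveState S =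
      (-1 : ℂ) ^ (L + S.card * Sᶜ.card) • pWaveState S := by
  have card_add : S.card + Sᶜ.card = L := by
    rw [Finset.card_add_card_compl, Fintype.card_fin]
  simp only [sq, ← Matrix.mulVec_mulVec, UKT_mulVec_pWaveState, Matrix.mulVec_smul,
    globalProd_Sy_mulVec_pWaveState, compl_compl, smul_smul, ← pow_add]
  congr 2
  linarith [numUpDownPairs_add_numUpDownPairs_compl S]

theorem sq_globalProd_Sy_mul_UKT_mul_Pproj (h : Even L) :
    (globalProd L Sy (-(((Real.pi / 2 : ℝ) : ℂ) * I)) * UKT L) ^ 2 * Pproj L =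
      (-I) ^ L • (globalProd L sigz (-(((Real.pi / 2 : ℝ) : ℂ) * I)) * Pproj L) := by
  rw [← Matrix.smul_mul]
  refine mul_Pproj_ext fun S => ?_
  have card_add : S.card + Sᶜ.card = L := by
    rw [Finset.card_add_card_compl, Fintype.card_fin]
  have sign := neg_one_pow_add_mul_eq_of_even (card_add.symm ▸ h : Even (S.card + Sᶜ.card))
  rw [card_add] at sign
  rw [sq_globalProd_Sy_mul_UKT_mulVec_pWaveState, Matrix.smul_mulVec,
    globalProd_sigz_mulVec_pWaveState, smul_smul, sign]

end PWave

/-- For even `L`, with `Y'_π = ∏_j exp(−i(π/2)Sʸ_j)`,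
`Z'_π = ∏_j exp(−i(π/2)σᶻ_j)`, and `P` the projection onto the hole-free subspace,
`P Y'_π U_KT Y'_π U_KT P = (−i)^L · P Z'_π P`. -/
theorem proj_Yprime_UKT (L : ℕ) (hL : 2 ≤ L) (hEven : Even L) :
    Pproj L * globalProd L Sy (-(((Real.pi / 2 : ℝ) : ℂ) * I)) * UKT L *
        globalProd L Sy (-(((Real.pi / 2 : ℝ) : ℂ) * I)) * UKT L * Pproj L =
      ((-I) ^ L) •
        (Pproj L * globalProd L sigz (-(((Real.pi / 2 : ℝ) : ℂ) * I)) * Pproj L) := by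
  have left_projected := congrArg (Pproj L * ·) (sq_globalProd_Sy_mul_UKT_mul_Pproj hEven)
  simpa only [sq, Matrix.mul_smul, ← Matrix.mul_assoc] using left_projected

end
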